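/- Let A ∈ ℝ^{n×n} be nonsingular, k ≥ 1, and let b ∈ ℝ^n be a unit norm vector with d(A, b) > k. If r = GMRES(A, b, k) and s = GMRES(Aᵀ, r/‖r‖, k), then ‖r‖ ≤ ‖s‖ ≤ Ψ_k(A). -/

import Mathlib

open Polynomial Matrix

/-- The Euclidean norm of a real vector. -/
noncomputable def euclNorm {ι : Type*} [Fintype ι] (v : ι → ℝ) : ℝ :=
  Real.sqrt (∑ i, v i ^ 2)

/-- The Euclidean norm of a complex vector. -/
noncomputable def euclNormC {ι : Type*} [Fintype ι] (v : ι → ℂ) : ℝ :=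
  Real.sqrt (∑ i, ‖v i‖ ^ 2)

/-- The Euclidean inner product of two real vectors. -/
noncomputable def edot {ι : Type*} [Fintype ι] (u v : ι → ℝ) : ℝ := ∑ i, u i * v i

/-- `p ∈ π_k`: real polynomials of degree at most `k` with value `1` at the origin. -/
def IsPik (k : ℕ) (p : Polynomial ℝ) : Prop := p.natDegree ≤ k ∧ p.eval 0 = 1

/-- `p ∈ π_{k,ℂ}`: complex polynomials of degree at most `k` with value `1` at the origin. -/
def IsPikC (k : ℕ) (p : Polynomial ℂ) : Prop := p.natDegree ≤ k ∧ p.eval 0 = 1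

/-- The `k`-th GMRES residual norm `min_{p ∈ π_k} ‖p(A)v‖`. -/
noncomputable def gmresVal {ι : Type*} [Fintype ι] [DecidableEq ι]
    (A : Matrix ι ι ℝ) (k : ℕ) (v : ι → ℝ) : ℝ :=
  sInf {s : ℝ | ∃ p : Polynomial ℝ, IsPik k p ∧ s = euclNorm ((Polynomial.aeval A p).mulVec v)}

/-- The `k`-th worst-case GMRES approximation `Ψ_k(A) = max_{‖v‖=1} min_{p ∈ π_k} ‖p(A)v‖`. -/
noncomputable def Psi {ι : Type*} [Fintype ι] [DecidableEq ι]
    (A : Matrix ι ι ℝ) (k : ℕ) : ℝ :=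
  sSup {r : ℝ | ∃ v : ι → ℝ, euclNorm v = 1 ∧ r = gmresVal A k v}

/-- `d(A)`: the degree of the minimal polynomial of `A`. -/
noncomputable def dA {ι : Type*} [Fintype ι] [DecidableEq ι] (A : Matrix ι ι ℝ) : ℕ :=
  (minpoly ℝ A).natDegree

/-- `d(A,b)`: the smallest degree of a nonzero polynomial `q` with `q(A)b = 0`. -/
noncomputable def dAb {ι : Type*} [Fintype ι] [DecidableEq ι]
    (A : Matrix ι ι ℝ) (b : ι → ℝ) : ℕ :=
  sInf {d : ℕ | ∃ q : Polynomial ℝ, q ≠ 0 ∧ q.natDegree = d ∧ (Polynomial.aeval A q).mulVec b = 0}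

/-- `r = GMRES(A,b,k)`: `r = p(A)b` for some `p ∈ π_k` minimizing `‖p(A)b‖` over `π_k`. -/
def IsGmresRes {ι : Type*} [Fintype ι] [DecidableEq ι]
    (A : Matrix ι ι ℝ) (k : ℕ) (b r : ι → ℝ) : Prop :=
  ∃ p : Polynomial ℝ, IsPik k p ∧ r = (Polynomial.aeval A p).mulVec b ∧
    ∀ q : Polynomial ℝ, IsPik k q → euclNorm r ≤ euclNorm ((Polynomial.aeval A q).mulVec b)

/-- `p` is the `k`-th GMRES polynomial of `A` and `b`: `p ∈ π_k` minimizes `‖p(A)b‖`. -/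
def IsGmresPoly {ι : Type*} [Fintype ι] [DecidableEq ι]
    (A : Matrix ι ι ℝ) (k : ℕ) (b : ι → ℝ) (p : Polynomial ℝ) : Prop :=
  IsPik k p ∧ ∀ q : Polynomial ℝ, IsPik k q →
    euclNorm ((Polynomial.aeval A p).mulVec b) ≤ euclNorm ((Polynomial.aeval A q).mulVec b)

/-- The Krylov subspace `K_k(A,b) = span{b, Ab, …, A^{k-1}b}`. -/
noncomputable def krylov {ι : Type*} [Fintype ι] [DecidableEq ι]
    (A : Matrix ι ι ℝ) (k : ℕ) (b : ι → ℝ) : Submodule ℝ (ι → ℝ) :=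
  Submodule.span ℝ (Set.range fun i : Fin k => (A ^ (i : ℕ)).mulVec b)

/-- `b` satisfies the cross equality for `A` and step `k`. -/
def CrossEq {ι : Type*} [Fintype ι] [DecidableEq ι]
    (A : Matrix ι ι ℝ) (k : ℕ) (b : ι → ℝ) : Prop :=
  ∀ r s : ι → ℝ, IsGmresRes A k b r → IsGmresRes Aᵀ k ((euclNorm r)⁻¹ • r) s →
    b = (euclNorm s)⁻¹ • s

/-- The Krylov matrix `K(v) = [Av, A²v, …, A^k v]`. -/
noncomputable def Kmat {n : ℕ} (A : Matrix (Fin n) (Fin n) ℝ) (k : ℕ) (v : Fin n → ℝ) :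
    Matrix (Fin n) (Fin k) ℝ :=
  Matrix.of fun i j => (A ^ ((j : ℕ) + 1)).mulVec v i

/-- `γ(v) = (K(v)ᵀK(v))⁻¹ K(v)ᵀ v`. -/
noncomputable def gammaVec {n : ℕ} (A : Matrix (Fin n) (Fin n) ℝ) (k : ℕ) (v : Fin n → ℝ) :
    Fin k → ℝ :=
  ((Kmat A k v)ᵀ * Kmat A k v)⁻¹ *ᵥ ((Kmat A k v)ᵀ *ᵥ v)

/-- `g(v) = min_{c ∈ ℝ^k} ‖v - K(v)c‖²`. -/
noncomputable def gFun {n : ℕ} (A : Matrix (Fin n) (Fin n) ℝ) (k : ℕ) (v : Fin n → ℝ) : ℝ :=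
  sInf {s : ℝ | ∃ c : Fin k → ℝ, s = euclNorm (v - Kmat A k v *ᵥ c) ^ 2}

/-- `p(z; c) = 1 - ∑_{j=1}^k c_j z^j`. -/
noncomputable def pPoly {k : ℕ} (c : Fin k → ℝ) : Polynomial ℝ :=
  1 - ∑ j : Fin k, Polynomial.C (c j) * Polynomial.X ^ ((j : ℕ) + 1)

/-- `f(c,v) = ‖p(A;c)v‖²`. -/
noncomputable def fFun {n k : ℕ} (A : Matrix (Fin n) (Fin n) ℝ) (c : Fin k → ℝ)
    (v : Fin n → ℝ) : ℝ :=
  euclNorm ((Polynomial.aeval A (pPoly c)).mulVec v) ^ 2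

/-- `F(c,v) = f(c,v)/(vᵀv)`. -/
noncomputable def FFun {n k : ℕ} (A : Matrix (Fin n) (Fin n) ℝ) (c : Fin k → ℝ)
    (v : Fin n → ℝ) : ℝ :=
  fFun A c v / edot v v

/-- The Toh matrix `A(ω, ε)`. -/
noncomputable def tohMatrix (ω ε : ℝ) : Matrix (Fin 4) (Fin 4) ℝ :=
  !![1, ε, 0, 0; 0, -1, ω / ε, 0; 0, 0, 1, ε; 0, 0, 0, -1]

/-- `p` is a `k`-th worst-case GMRES polynomial of `A`. -/
def IsWCPoly {ι : Type*} [Fintype ι] [DecidableEq ι]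
    (A : Matrix ι ι ℝ) (k : ℕ) (p : Polynomial ℝ) : Prop :=
  IsPik k p ∧ ∃ b : ι → ℝ, euclNorm b = 1 ∧
    (∀ q : Polynomial ℝ, IsPik k q →
      euclNorm ((Polynomial.aeval A p).mulVec b) ≤ euclNorm ((Polynomial.aeval A q).mulVec b)) ∧
    euclNorm ((Polynomial.aeval A p).mulVec b) = Psi A k

/-- The spectral (Euclidean operator) norm of a real matrix. -/
noncomputable def specNorm {ι : Type*} [Fintype ι] (M : Matrix ι ι ℝ) : ℝ :=
  sSup {r : ℝ | ∃ v : ι → ℝ, euclNorm v = 1 ∧ r = euclNorm (M *ᵥ v)}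

/-- The `k`-th ideal GMRES approximation `φ_k(A) = min_{p ∈ π_k} ‖p(A)‖`. -/
noncomputable def phiIdeal {ι : Type*} [Fintype ι] [DecidableEq ι]
    (A : Matrix ι ι ℝ) (k : ℕ) : ℝ :=
  sInf {r : ℝ | ∃ p : Polynomial ℝ, IsPik k p ∧ r = specNorm (Polynomial.aeval A p)}

/-- Complexification of a real matrix. -/
noncomputable def matC {ι : Type*} (A : Matrix ι ι ℝ) : Matrix ι ι ℂ :=
  A.map fun x => (x : ℂ)

/-- Complexification of a real vector. -/
noncomputable def vecC {ι : Type*} (b : ι → ℝ) : ι → ℂ := fun i => (b i : ℂ)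

/-- `Ψ_{k,ℂ,ℝ}(A)`: complex polynomials, real initial vectors. -/
noncomputable def PsiCR {ι : Type*} [Fintype ι] [DecidableEq ι]
    (A : Matrix ι ι ℝ) (k : ℕ) : ℝ :=
  sSup {r : ℝ | ∃ b : ι → ℝ, euclNorm b = 1 ∧
    r = sInf {s : ℝ | ∃ p : Polynomial ℂ, IsPikC k p ∧
      s = euclNormC ((Polynomial.aeval (matC A) p).mulVec (vecC b))}}

/-- `Ψ_{k,ℂ,ℂ}(A)`: complex polynomials, complex initial vectors. -/
noncomputable def PsiCC {ι : Type*} [Fintype ι] [DecidableEq ι]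
    (A : Matrix ι ι ℝ) (k : ℕ) : ℝ :=
  sSup {r : ℝ | ∃ b : ι → ℂ, euclNormC b = 1 ∧
    r = sInf {s : ℝ | ∃ p : Polynomial ℂ, IsPikC k p ∧
      s = euclNormC ((Polynomial.aeval (matC A) p).mulVec b)}}

/-- `Ψ_{k,ℝ,ℂ}(A)`: real polynomials, complex initial vectors. -/
noncomputable def PsiRC {ι : Type*} [Fintype ι] [DecidableEq ι]
    (A : Matrix ι ι ℝ) (k : ℕ) : ℝ :=
  sSup {r : ℝ | ∃ b : ι → ℂ, euclNormC b = 1 ∧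
    r = sInf {s : ℝ | ∃ p : Polynomial ℝ, IsPik k p ∧
      s = euclNormC ((Polynomial.aeval (matC A) (p.map (algebraMap ℝ ℂ))).mulVec b)}}

/-- `φ_{k,ℝ,ℝ}(A)`. -/
noncomputable def phiRR {ι : Type*} [Fintype ι] [DecidableEq ι]
    (A : Matrix ι ι ℝ) (k : ℕ) : ℝ :=
  sInf {r : ℝ | ∃ p : Polynomial ℝ, IsPik k p ∧
    r = sSup {s : ℝ | ∃ b : ι → ℝ, euclNorm b = 1 ∧
      s = euclNorm ((Polynomial.aeval A p).mulVec b)}}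

/-- `φ_{k,ℂ,ℝ}(A)`. -/
noncomputable def phiCR {ι : Type*} [Fintype ι] [DecidableEq ι]
    (A : Matrix ι ι ℝ) (k : ℕ) : ℝ :=
  sInf {r : ℝ | ∃ p : Polynomial ℂ, IsPikC k p ∧
    r = sSup {s : ℝ | ∃ b : ι → ℝ, euclNorm b = 1 ∧
      s = euclNormC ((Polynomial.aeval (matC A) p).mulVec (vecC b))}}

/-- `φ_{k,ℝ,ℂ}(A)`. -/
noncomputable def phiRC {ι : Type*} [Fintype ι] [DecidableEq ι]
    (A : Matrix ι ι ℝ) (k : ℕ) : ℝ :=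
  sInf {r : ℝ | ∃ p : Polynomial ℝ, IsPik k p ∧
    r = sSup {s : ℝ | ∃ b : ι → ℂ, euclNormC b = 1 ∧
      s = euclNormC ((Polynomial.aeval (matC A) (p.map (algebraMap ℝ ℂ))).mulVec b)}}

/-- `φ_{k,ℂ,ℂ}(A)`. -/
noncomputable def phiCC {ι : Type*} [Fintype ι] [DecidableEq ι]
    (A : Matrix ι ι ℝ) (k : ℕ) : ℝ :=
  sInf {r : ℝ | ∃ p : Polynomial ℂ, IsPikC k p ∧
    r = sSup {s : ℝ | ∃ b : ι → ℂ, euclNormC b = 1 ∧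
      s = euclNormC ((Polynomial.aeval (matC A) p).mulVec b)}}

/-!
The polynomial residuals `q(A)b`, `q ∈ π_k`, form a convex set whose element of least norm is the
GMRES residual `r`, so `‖r‖² ≤ ⟨r, q(A)b⟩ = ⟨q(Aᵀ)r, b⟩ ≤ ‖q(Aᵀ)r‖ ‖b‖` for every `q ∈ π_k`.
Dividing by `‖r‖`, no residual of `Aᵀ` started at `r/‖r‖` has norm below `‖r‖ / ‖b‖`. Hence
`‖r‖ ≤ ‖s‖`; the same bound for `Aᵀ` and `s` shows that the unit vector `s/‖s‖` has GMRES value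
at least `‖s‖` for `A`, and this value is at most `Ψ_k(A)`.
-/

theorem sq_norm_le_inner_of_forall_norm_le {E : Type*} [NormedAddCommGroup E]
    [InnerProductSpace ℝ E] {K : Set E} (hK : Convex ℝ K) {v w : E} (hv : v ∈ K)
    (hmin : ∀ u ∈ K, ‖v‖ ≤ ‖u‖) (hw : w ∈ K) : ‖v‖ ^ 2 ≤ inner ℝ v w := by
  have : Nonempty K := ⟨⟨v, hv⟩⟩
  have hinf : ‖0 - v‖ = ⨅ u : K, ‖0 - (u : E)‖ := by
    simp only [zero_sub, norm_neg]
    exact le_antisymm (le_ciInf fun u => hmin u u.2)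
      (ciInf_le ⟨0, Set.forall_mem_range.2 fun u => norm_nonneg _⟩ (⟨v, hv⟩ : K))
  have hvar := (norm_eq_iInf_iff_real_inner_le_zero hK hv).1 hinf w hw
  rw [zero_sub, inner_neg_left, inner_sub_right, real_inner_self_eq_norm_sq] at hvar
  linarith

theorem transpose_aeval {R ι : Type*} [CommSemiring R] [Fintype ι] [DecidableEq ι]
    (A : Matrix ι ι R) (p : R[X]) : (aeval A p)ᵀ = aeval Aᵀ p := by
  have h := aeval_algHom_apply (transposeAlgEquiv ι R R) A p
  simpa [aeval_op_apply] using (congrArg MulOpposite.unop h).symm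

theorem dotProduct_aeval_mulVec {R ι : Type*} [CommSemiring R] [Fintype ι] [DecidableEq ι]
    (A : Matrix ι ι R) (p : R[X]) (u v : ι → R) :
    u ⬝ᵥ aeval A p *ᵥ v = aeval Aᵀ p *ᵥ u ⬝ᵥ v := by
  rw [← transpose_aeval, mulVec_transpose, dotProduct_mulVec]

section EuclNorm

variable {ι : Type*} [Fintype ι]

theorem euclNorm_eq_norm_toLp (v : ι → ℝ) : euclNorm v = ‖WithLp.toLp 2 v‖ := by
  simp [euclNorm, EuclideanSpace.norm_eq]

theorem euclNorm_nonneg (v : ι → ℝ) : 0 ≤ euclNorm v :=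
  Real.sqrt_nonneg _

theorem euclNorm_pos {v : ι → ℝ} : 0 < euclNorm v ↔ v ≠ 0 := by
  simp [euclNorm_eq_norm_toLp]

theorem euclNorm_smul (c : ℝ) (v : ι → ℝ) : euclNorm (c • v) = |c| * euclNorm v := by
  simp [euclNorm_eq_norm_toLp, norm_smul]

theorem euclNorm_inv_smul_self {v : ι → ℝ} (hv : v ≠ 0) :
    euclNorm ((euclNorm v)⁻¹ • v) = 1 := by
  rw [euclNorm_smul, abs_of_nonneg (inv_nonneg.2 (euclNorm_nonneg v)),
    inv_mul_cancel₀ (euclNorm_pos.2 hv).ne']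

theorem dotProduct_le_euclNorm_mul_euclNorm (u v : ι → ℝ) : u ⬝ᵥ v ≤ euclNorm u * euclNorm v :=
  Real.sum_mul_le_sqrt_mul_sqrt _ _ _

theorem sq_euclNorm_le_dotProduct_of_forall_le {K : Set (ι → ℝ)} (hK : Convex ℝ K)
    {v w : ι → ℝ} (hv : v ∈ K) (hmin : ∀ u ∈ K, euclNorm v ≤ euclNorm u) (hw : w ∈ K) :
    euclNorm v ^ 2 ≤ v ⬝ᵥ w := by
  have hK' : Convex ℝ (WithLp.toLp 2 '' K) :=
    hK.linear_image (WithLp.linearEquiv 2 ℝ (ι → ℝ)).symm.toLinearMap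
  have h := sq_norm_le_inner_of_forall_norm_le hK' (Set.mem_image_of_mem _ hv)
    (Set.forall_mem_image.2 fun u hu => by simpa only [euclNorm_eq_norm_toLp] using hmin u hu)
    (Set.mem_image_of_mem _ hw)
  rwa [← euclNorm_eq_norm_toLp, EuclideanSpace.inner_toLp_toLp, star_trivial,
    dotProduct_comm] at h

end EuclNorm

theorem isPik_one (k : ℕ) : IsPik k 1 := by
  simp [IsPik]

theorem IsPik.ne_zero {k : ℕ} {p : ℝ[X]} (hp : IsPik k p) : p ≠ 0 := by
  rintro rfl
  simpa using hp.2

theorem convex_setOf_isPik (k : ℕ) : Convex ℝ {p : ℝ[X] | IsPik k p} := by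
  rintro p ⟨hpdeg, hp0⟩ q ⟨hqdeg, hq0⟩ a b - - hab
  exact ⟨natDegree_add_le_of_degree_le ((natDegree_smul_le a p).trans hpdeg)
    ((natDegree_smul_le b q).trans hqdeg), by simp [hp0, hq0, hab]⟩

section Gmres

variable {ι : Type*} [Fintype ι] [DecidableEq ι] {A : Matrix ι ι ℝ} {k : ℕ}

theorem gmresVal_le {p : ℝ[X]} (hp : IsPik k p) (v : ι → ℝ) :
    gmresVal A k v ≤ euclNorm (aeval A p *ᵥ v) := by
  refine csInf_le ⟨0, ?_⟩ ⟨p, hp, rfl⟩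
  rintro _ ⟨q, -, rfl⟩
  exact euclNorm_nonneg _

theorem le_gmresVal {v : ι → ℝ} {c : ℝ}
    (h : ∀ p, IsPik k p → c ≤ euclNorm (aeval A p *ᵥ v)) : c ≤ gmresVal A k v := by
  refine le_csInf ⟨_, 1, isPik_one k, rfl⟩ ?_
  rintro _ ⟨p, hp, rfl⟩
  exact h p hp

theorem gmresVal_le_euclNorm (A : Matrix ι ι ℝ) (k : ℕ) (v : ι → ℝ) :
    gmresVal A k v ≤ euclNorm v := by
  simpa using gmresVal_le (A := A) (isPik_one k) v

theorem gmresVal_le_Psi (A : Matrix ι ι ℝ) (k : ℕ) {v : ι → ℝ} (hv : euclNorm v = 1) :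
    gmresVal A k v ≤ Psi A k := by
  refine le_csSup ⟨1, ?_⟩ ⟨v, hv, rfl⟩
  rintro _ ⟨u, hu, rfl⟩
  exact (gmresVal_le_euclNorm A k u).trans_eq hu

theorem aeval_mulVec_ne_zero_of_natDegree_lt_dAb {b : ι → ℝ} {p : ℝ[X]} (hp : p ≠ 0)
    (hd : p.natDegree < dAb A b) : aeval A p *ᵥ b ≠ 0 :=
  fun h => Nat.notMem_of_lt_sInf hd ⟨p, hp, rfl, h⟩

theorem convex_image_aeval_mulVec (A : Matrix ι ι ℝ) (k : ℕ) (b : ι → ℝ) :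
    Convex ℝ ((fun p : ℝ[X] => aeval A p *ᵥ b) '' {p | IsPik k p}) :=
  (convex_setOf_isPik k).is_linear_image
    ⟨fun p q => by rw [map_add, add_mulVec], fun c p => by rw [map_smul, smul_mulVec]⟩

namespace IsGmresRes

variable {b r : ι → ℝ}

theorem ne_zero (hr : IsGmresRes A k b r) (hd : k < dAb A b) : r ≠ 0 := by
  obtain ⟨p, hp, rfl, -⟩ := hr
  exact aeval_mulVec_ne_zero_of_natDegree_lt_dAb hp.ne_zero (hp.1.trans_lt hd)

theorem gmresVal_eq (hr : IsGmresRes A k b r) : gmresVal A k b = euclNorm r := by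
  obtain ⟨p, hp, rfl, hmin⟩ := hr
  exact le_antisymm (gmresVal_le hp b) (le_gmresVal hmin)

theorem sq_euclNorm_le_dotProduct (hr : IsGmresRes A k b r) {q : ℝ[X]} (hq : IsPik k q) :
    euclNorm r ^ 2 ≤ r ⬝ᵥ aeval A q *ᵥ b := by
  obtain ⟨p, hp, rfl, hmin⟩ := hr
  exact sq_euclNorm_le_dotProduct_of_forall_le (convex_image_aeval_mulVec A k b) ⟨p, hp, rfl⟩
    (Set.forall_mem_image.2 hmin) ⟨q, hq, rfl⟩

theorem sq_euclNorm_le_euclNorm_aeval_transpose_mul (hr : IsGmresRes A k b r) {q : ℝ[X]}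
    (hq : IsPik k q) :
    euclNorm r ^ 2 ≤ euclNorm (aeval Aᵀ q *ᵥ r) * euclNorm b :=
  calc euclNorm r ^ 2 ≤ r ⬝ᵥ aeval A q *ᵥ b := hr.sq_euclNorm_le_dotProduct hq
    _ = aeval Aᵀ q *ᵥ r ⬝ᵥ b := dotProduct_aeval_mulVec A q r b
    _ ≤ euclNorm (aeval Aᵀ q *ᵥ r) * euclNorm b := dotProduct_le_euclNorm_mul_euclNorm _ _

theorem euclNorm_div_le_gmresVal_transpose (hr : IsGmresRes A k b r) (hr0 : r ≠ 0) :
    euclNorm r / euclNorm b ≤ gmresVal Aᵀ k ((euclNorm r)⁻¹ • r) := by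
  refine le_gmresVal fun q hq => div_le_of_le_mul₀ (euclNorm_nonneg b) (euclNorm_nonneg _) ?_
  have hpos : 0 < euclNorm r := euclNorm_pos.2 hr0
  rw [mulVec_smul, euclNorm_smul, abs_of_pos (inv_pos.2 hpos), mul_assoc,
    le_inv_mul_iff₀ hpos, ← sq]
  exact hr.sq_euclNorm_le_euclNorm_aeval_transpose_mul hq

end IsGmresRes

end Gmres

theorem cross_iteration_nondecreasing_general {ι : Type*} [Fintype ι] [DecidableEq ι]
    (A : Matrix ι ι ℝ) (k : ℕ) (b : ι → ℝ) (hb : euclNorm b = 1) (r s : ι → ℝ)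
    (hr : IsGmresRes A k b r) (hr0 : r ≠ 0)
    (hs : IsGmresRes Aᵀ k ((euclNorm r)⁻¹ • r) s) :
    euclNorm r ≤ euclNorm s ∧ euclNorm s ≤ Psi A k := by
  have hrs : euclNorm r ≤ euclNorm s := by
    simpa only [hb, div_one, hs.gmresVal_eq] using hr.euclNorm_div_le_gmresVal_transpose hr0
  have hs0 : s ≠ 0 := euclNorm_pos.1 ((euclNorm_pos.2 hr0).trans_le hrs)
  have hsA : euclNorm s ≤ gmresVal A k ((euclNorm s)⁻¹ • s) := by
    simpa only [euclNorm_inv_smul_self hr0, div_one, transpose_transpose] using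
      hs.euclNorm_div_le_gmresVal_transpose hs0
  exact ⟨hrs, hsA.trans (gmresVal_le_Psi A k (euclNorm_inv_smul_self hs0))⟩

/-- For a unit norm `b` with `d(A,b) > k`, `r = GMRES(A,b,k)` and
`s = GMRES(Aᵀ, r/‖r‖, k)`, one has `‖r‖ ≤ ‖s‖ ≤ Ψ_k(A)`. -/
theorem cross_iteration_nondecreasing {n : ℕ} (A : Matrix (Fin n) (Fin n) ℝ)
    (hA : IsUnit A) (k : ℕ) (hk : 1 ≤ k)
    (b : Fin n → ℝ) (hb : euclNorm b = 1) (hd : k < dAb A b)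
    (r s : Fin n → ℝ) (hr : IsGmresRes A k b r)
    (hs : IsGmresRes Aᵀ k ((euclNorm r)⁻¹ • r) s) :
    euclNorm r ≤ euclNorm s ∧ euclNorm s ≤ Psi A k :=
  cross_iteration_nondecreasing_general A k b hb r s hr (hr.ne_zero hd) hs
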